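/- arXiv:0803.1570 — 5 statements merged into one kernel-verified Lean document; each statement's English description precedes it below -/
import Mathlib

section
/- Let f : ℝ × ℝⁿ × ℝᵐ → ℝⁿ be continuous, let u : [0,T] → ℝᵐ be continuous, and let x : [0,T] → ℝⁿ be continuously differentiable with ẋ(t) = f(t, x(t), u(t)) for all t ∈ [0,T]. Define the final occupation measure μ_F = δ_{x(T)} (the Dirac measure at x(T)), the initial occupation measure μ_I = δ_{x(0)}, and the trajectory occupation measure μ_T on ℝ × ℝⁿ × ℝᵐ as the pushforward of Lebesgue measure on [0,T] under the map t ↦ (t, x(t), u(t)). Then for all α ∈ ℕ and all multi-indices β ∈ ℕⁿ: T^α ∫ x^β dμ_F = 0^α ∫ x^β dμ_I + ∫ [∂(t^α x^β)/∂t + ∇ₓ(t^α x^β) · f(t,x,u)] dμ_T(t,x,u). -/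
/-!
Along the trajectory, `v(t) = t ^ α * x(t) ^ β` satisfies `v' = ∂(t^α x^β)/∂t + ∇ₓ(t^α x^β) · f`
by the chain rule and the ODE. Integrating against a pushforward measure is integrating along the
trajectory, so the claim is the fundamental theorem of calculus for `v` on `[0, T]`.
Measurability and integrability hold because the integrand is a continuous function of
`(t, x, u)` (`integrand_eq` puts it in a form where this is visible) and the trajectory is
continuous on `[0, T]`.
-/

open MeasureTheory

lemma contDiff_monomial {n : ℕ} (β : Fin n → ℕ) :
    ContDiff ℝ 1 fun y : Fin n → ℝ => ∏ i, y i ^ β i :=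
  contDiff_prod fun i _ => (contDiff_apply ℝ ℝ i).pow (β i)

/-- Coordinate-wise partial derivatives are assembled into the Fréchet derivative of the
monomial, applied to `w`. -/
lemma integrand_eq {n : ℕ} (α : ℕ) (β : Fin n → ℕ) (t : ℝ) (y w : Fin n → ℝ) :
    deriv (fun s => s ^ α * ∏ i, y i ^ β i) t
        + ∑ i, fderiv ℝ (fun y : Fin n → ℝ => t ^ α * ∏ j, y j ^ β j) y (Pi.single i 1) * w i
      = (α * t ^ (α - 1)) * ∏ i, y i ^ β i
        + t ^ α * fderiv ℝ (fun y : Fin n → ℝ => ∏ j, y j ^ β j) y w := by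
  have hd : DifferentiableAt ℝ (fun y : Fin n → ℝ => ∏ j, y j ^ β j) y :=
    (contDiff_monomial β).differentiable one_ne_zero y
  rw [((hasDerivAt_pow α t).mul_const _).deriv, fderiv_const_mul hd]
  congr 1
  have hw : w = ∑ i, w i • (Pi.single i 1 : Fin n → ℝ) := by
    ext j
    simp [Finset.sum_apply, Pi.single_apply]
  conv_rhs => rw [hw]
  rw [map_sum, Finset.mul_sum]
  refine Finset.sum_congr rfl fun i _ => ?_
  simp only [smul_apply, map_smul, smul_eq_mul]
  ring

/-- the linear moment constraints linking the initial, final and trajectory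
occupation measures of an admissible trajectory:
`T^α ∫ x^β dμ_F = 0^α ∫ x^β dμ_I + ∫ [∂(t^α x^β)/∂t + ∇ₓ(t^α x^β)·f] dμ_T`. -/
theorem stmt1 (n m : ℕ) (T : ℝ) (hT : 0 < T)
    (f : ℝ → (Fin n → ℝ) → (Fin m → ℝ) → (Fin n → ℝ))
    (hf : Continuous fun p : ℝ × (Fin n → ℝ) × (Fin m → ℝ) => f p.1 p.2.1 p.2.2)
    (u : ℝ → Fin m → ℝ) (hu : ContinuousOn u (Set.Icc 0 T))
    (x : ℝ → Fin n → ℝ) (hx : ContDiffOn ℝ 1 x (Set.Icc 0 T))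
    (hode : ∀ t ∈ Set.Icc 0 T, HasDerivAt x (f t (x t) (u t)) t)
    -- the three occupation measures
    (μF μI : Measure (Fin n → ℝ)) (μT : Measure (ℝ × (Fin n → ℝ) × (Fin m → ℝ)))
    (hμF : μF = Measure.dirac (x T)) (hμI : μI = Measure.dirac (x 0))
    (hμT : μT = Measure.map (fun t => (t, x t, u t)) (volume.restrict (Set.Icc 0 T)))
    (α : ℕ) (β : Fin n → ℕ) :
    T ^ α * (∫ y, ∏ i, y i ^ β i ∂μF)
      = (0:ℝ) ^ α * (∫ y, ∏ i, y i ^ β i ∂μI)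
        + ∫ p, (deriv (fun s => s ^ α * ∏ i, p.2.1 i ^ β i) p.1
            + ∑ i, fderiv ℝ (fun y : Fin n → ℝ => p.1 ^ α * ∏ j, y j ^ β j) p.2.1
                (Pi.single i 1) * f p.1 p.2.1 p.2.2 i) ∂μT := by
  subst hμF hμI hμT
  have hxc : ContinuousOn x (Set.Icc 0 T) := hx.continuousOn
  have htraj : ContinuousOn (fun t => (t, x t, u t)) (Set.Icc 0 T) :=
    continuousOn_id.prodMk (hxc.prodMk hu)
  have hP := contDiff_monomial β
  have hcont : Continuous fun p : ℝ × (Fin n → ℝ) × (Fin m → ℝ) =>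
      (α * p.1 ^ (α - 1)) * ∏ i, p.2.1 i ^ β i
        + p.1 ^ α * fderiv ℝ (fun y : Fin n → ℝ => ∏ j, y j ^ β j) p.2.1
            (f p.1 p.2.1 p.2.2) := by
    have h1 : Continuous fun p : ℝ × (Fin n → ℝ) × (Fin m → ℝ) =>
        fderiv ℝ (fun y : Fin n → ℝ => ∏ j, y j ^ β j) p.2.1 :=
      (hP.continuous_fderiv one_ne_zero).comp (by fun_prop)
    have h2 := h1.clm_apply hf
    fun_prop
  simp only [integrand_eq, integral_dirac]
  rw [integral_map (htraj.aemeasurable measurableSet_Icc) hcont.aestronglyMeasurable,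
    integral_Icc_eq_integral_Ioc, ← intervalIntegral.integral_of_le hT.le]
  have hint := hcont.comp_continuousOn htraj
  rw [intervalIntegral.integral_eq_sub_of_hasDerivAt
    (f := fun t => t ^ α * ∏ i, x t i ^ β i)]
  · ring
  · intro t ht
    rw [Set.uIcc_of_le hT.le] at ht
    have hd := (hP.differentiable one_ne_zero (x t)).hasFDerivAt.comp_hasDerivAt t (hode t ht)
    exact (hasDerivAt_pow α t).mul hd
  · rw [← Set.uIcc_of_le hT.le] at hint
    exact hint.intervalIntegrable
end

section
/- Let p be a real polynomial in n variables of total degree at most 2d. Then p is a sum of squares of polynomials (i.e., p = Σ_{i=1}^{s} f_i² for some polynomials f_i) if and only if there exists a real positive semidefinite symmetric matrix Q, indexed by the multi-indices α ∈ ℕⁿ with |α| ≤ d, such that p(x) = m_d(x)' Q m_d(x) identically in x, where m_d(x) is the vector of all monomials x^α with |α| ≤ d. -/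
open MvPolynomial

/-!
A Gram matrix representation `p = m_dᵀ Q m_d` and a decomposition of `p` as a sum of squares of
polynomials of degree at most `d` are the same data: `Q` is positive semidefinite exactly when
`Q = ∑ i, vᵢ vᵢᵀ`, and then `m_dᵀ Q m_d = ∑ i, (vᵢᵀ m_d)²`, where `vᵢ` is read as the coefficient
vector of a polynomial of degree at most `d` (`eval_eq_sum_coeff`).

It remains to see that the summands of `p = ∑ i, fᵢ²` automatically have degree at most `d`
(`totalDegree_le_of_sum_sq`). If the `fᵢ` have degree at most `D + 1` with `D ≥ d`, then the
homogeneous component of `p` in degree `2 (D + 1) > 2 d` vanishes, but it is the sum of the squares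
of the degree `D + 1` components of the `fᵢ`. A sum of squares vanishing at every real point has
all its summands zero there, so these components are zero and every `fᵢ` has degree at most `D`.
-/

lemma totalDegree_sub_homogeneousComponent_le {n D : ℕ} {f : MvPolynomial (Fin n) ℝ}
    (hf : f.totalDegree ≤ D + 1) :
    (f - homogeneousComponent (D + 1) f).totalDegree ≤ D := by
  refine Finset.sup_le fun b hb => ?_
  by_contra! hlt
  change D < b.degree at hlt
  rw [mem_support_iff, coeff_sub, coeff_homogeneousComponent] at hb
  by_cases h : b.degree = D + 1
  · simp [h] at hb
  · have : f.totalDegree < b.degree := by omega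
    exact hb (by simp [h, coeff_eq_zero_of_totalDegree_lt (f := f) (d := b) this])

lemma homogeneousComponent_sq {n D : ℕ} {f : MvPolynomial (Fin n) ℝ}
    (hf : f.totalDegree ≤ D + 1) :
    homogeneousComponent (2 * (D + 1)) (f ^ 2) = (homogeneousComponent (D + 1) f) ^ 2 := by
  have hr := totalDegree_sub_homogeneousComponent_le hf
  set g := homogeneousComponent (D + 1) f with hg
  have hgh : g.IsHomogeneous (D + 1) := homogeneousComponent_isHomogeneous _ _
  have hsplit : f ^ 2 = g ^ 2 + (f + g) * (f - g) := by ring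
  have hfg : (f + g).totalDegree ≤ D + 1 :=
    (totalDegree_add _ _).trans (max_le hf hgh.totalDegree_le)
  have hlow : ((f + g) * (f - g)).totalDegree < 2 * (D + 1) :=
    (totalDegree_mul _ _).trans_lt (by omega)
  rw [hsplit, map_add, homogeneousComponent_eq_zero _ _ hlow, add_zero]
  exact homogeneousComponent_eq_self (by simpa [mul_comm] using hgh.pow 2)

/-- Since the top-degree components of real squares cannot cancel, a degree bound on a sum of
squares lowers a common degree bound on the summands. -/
lemma totalDegree_le_of_sum_sq_step {n s D : ℕ} {f : Fin s → MvPolynomial (Fin n) ℝ}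
    (hf : ∀ i, (f i).totalDegree ≤ D + 1)
    (hsum : (∑ i, f i ^ 2).totalDegree < 2 * (D + 1)) (i : Fin s) :
    (f i).totalDegree ≤ D := by
  have h0 : ∑ j, (homogeneousComponent (D + 1) (f j)) ^ 2 = 0 := by
    rw [← homogeneousComponent_eq_zero _ _ hsum, map_sum]
    exact Finset.sum_congr rfl fun j _ => (homogeneousComponent_sq (hf j)).symm
  have hi : homogeneousComponent (D + 1) (f i) = 0 := by
    refine MvPolynomial.funext fun x => ?_
    have hx := congrArg (eval x) h0
    simp only [map_sum, map_pow, map_zero] at hx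
    rw [Finset.sum_eq_zero_iff_of_nonneg fun _ _ => sq_nonneg _] at hx
    simpa using hx i (Finset.mem_univ i)
  simpa [hi] using totalDegree_sub_homogeneousComponent_le (hf i)

lemma totalDegree_le_of_sum_sq {n s d : ℕ} {f : Fin s → MvPolynomial (Fin n) ℝ}
    (hsum : (∑ i, f i ^ 2).totalDegree ≤ 2 * d) (i : Fin s) : (f i).totalDegree ≤ d := by
  have key : ∀ k, (∀ j, (f j).totalDegree ≤ d + k) → ∀ j, (f j).totalDegree ≤ d := by
    intro k
    induction k with
    | zero => exact id
    | succ k ih =>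
      exact fun h => ih (totalDegree_le_of_sum_sq_step (D := d + k) h (by omega))
  exact key (∑ j, (f j).totalDegree) (fun j => le_add_left
    (Finset.single_le_sum (f := fun j => (f j).totalDegree) (fun _ _ => Nat.zero_le _)
      (Finset.mem_univ j))) i

/-- The exponent of the monomial of degree at most `d` indexed by `a`. -/
noncomputable def expo {n d : ℕ} (a : {α : Fin n → Fin (d + 1) // (∑ i, (α i : ℕ)) ≤ d}) :
    Fin n →₀ ℕ :=
  Finsupp.equivFunOnFinite.symm fun i => (a.1 i : ℕ)

lemma expo_injective {n d : ℕ} : Function.Injective (expo (n := n) (d := d)) := by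
  intro a b h
  ext i
  exact DFunLike.congr_fun h i

/-- A polynomial of degree at most `d` is its coefficient vector paired with `m_d`. -/
lemma eval_eq_sum_coeff {n d : ℕ} {f : MvPolynomial (Fin n) ℝ} (hf : f.totalDegree ≤ d)
    (x : Fin n → ℝ) :
    eval x f = ∑ a : {α : Fin n → Fin (d + 1) // (∑ i, (α i : ℕ)) ≤ d},
      coeff (expo a) f * ∏ i, x i ^ (a.1 i : ℕ) := by
  classical
  calc eval x f = ∑ b ∈ f.support, coeff b f * ∏ i, x i ^ b i := eval_eq' x f
    _ = ∑ b ∈ Finset.univ.image (expo (n := n) (d := d)), coeff b f * ∏ i, x i ^ b i := by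
        refine Finset.sum_subset (fun b hb => ?_) fun b _ hb => by
          rw [notMem_support_iff.mp hb, zero_mul]
        have hdeg : ∑ i, b i ≤ d := by
          rw [← Finsupp.degree_eq_sum]
          exact (le_totalDegree hb).trans hf
        have hlt (i : Fin n) : b i < d + 1 := Nat.lt_succ_of_le
          ((Finset.single_le_sum (fun _ _ => Nat.zero_le _) (Finset.mem_univ i)).trans hdeg)
        exact Finset.mem_image.mpr
          ⟨⟨fun i => ⟨b i, hlt i⟩, hdeg⟩, Finset.mem_univ _, Finsupp.ext fun _ => rfl⟩
    _ = _ := Finset.sum_image fun a _ b _ h => expo_injective h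

/-- The quadratic form of a sum of rank-one matrices `vᵢ vᵢᵀ` is a sum of squares of linear
forms. -/
lemma quadForm_sum_vecMulVec {ι : Type*} [Fintype ι] {s : ℕ} (v : Fin s → ι → ℝ) (m : ι → ℝ) :
    ∑ a, ∑ b, m a * (∑ i, Matrix.vecMulVec (v i) (star (v i))) a b * m b =
      ∑ i, (∑ a, v i a * m a) ^ 2 := by
  simp only [Matrix.sum_apply, Matrix.vecMulVec_apply, star_trivial, sq,
    Finset.mul_sum, Finset.sum_mul]
  rw [Finset.sum_congr rfl fun a _ => Finset.sum_comm, Finset.sum_comm]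
  exact Finset.sum_congr rfl fun i _ => Finset.sum_congr rfl fun a _ =>
    Finset.sum_congr rfl fun b _ => by ring

/-- a real polynomial `p` in `n` variables of total degree at most `2d` is a sum
of squares of polynomials if and only if there is a positive semidefinite real symmetric
matrix `Q`, indexed by the multi-indices `α` with `|α| ≤ d` (encoded as functions
`Fin n → Fin (d+1)` with entry sum at most `d`), with `p(x) = m_d(x)' Q m_d(x)` for all `x`,
where `m_d(x)` is the vector of monomials `x^α`, `|α| ≤ d`. -/
theorem stmt5 (n d : ℕ) (p : MvPolynomial (Fin n) ℝ) (hp : p.totalDegree ≤ 2 * d) :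
    (∃ (s : ℕ) (f : Fin s → MvPolynomial (Fin n) ℝ), p = ∑ i, (f i) ^ 2) ↔
    (∃ Q : Matrix {α : Fin n → Fin (d + 1) // (∑ i, (α i : ℕ)) ≤ d}
                  {α : Fin n → Fin (d + 1) // (∑ i, (α i : ℕ)) ≤ d} ℝ,
      Q.PosSemidef ∧
      ∀ x : Fin n → ℝ, eval x p =
        ∑ a, ∑ b, (∏ i, x i ^ (a.1 i : ℕ)) * Q a b * (∏ i, x i ^ (b.1 i : ℕ))) := by
  constructor
  · rintro ⟨s, f, rfl⟩
    refine ⟨∑ i, Matrix.vecMulVec (fun a => coeff (expo a) (f i))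
      (star fun a => coeff (expo a) (f i)),
      Matrix.posSemidef_iff_eq_sum_vecMulVec.mpr ⟨s, _, rfl⟩, fun x => ?_⟩
    rw [quadForm_sum_vecMulVec, map_sum]
    refine Finset.sum_congr rfl fun i _ => ?_
    rw [map_pow, eval_eq_sum_coeff (totalDegree_le_of_sum_sq hp i)]
  · rintro ⟨Q, hQ, hpQ⟩
    obtain ⟨s, v, rfl⟩ := Matrix.posSemidef_iff_eq_sum_vecMulVec.mp hQ
    refine ⟨s, fun i => ∑ a, C (v i a) * ∏ j, X j ^ (a.1 j : ℕ), MvPolynomial.funext fun x => ?_⟩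
    rw [hpQ, quadForm_sum_vecMulVec]
    simp
end

section
/- Let T > 0, let f : ℝ × ℝⁿ × ℝᵐ → ℝⁿ and h : ℝ × ℝⁿ × ℝᵐ → ℝ be continuous, let H : ℝⁿ → ℝ, let C_T ⊆ ℝ × ℝⁿ × ℝᵐ and C_F ⊆ ℝⁿ, and let φ : ℝ × ℝⁿ → ℝ be continuously differentiable with ∂φ/∂t (t,x) + ∇ₓφ(t,x) · f(t,x,u) + h(t,x,u) ≥ 0 for all (t,x,u) ∈ C_T and φ(T,x) ≤ H(x) for all x ∈ C_F. Let x : [0,T] → ℝⁿ be continuously differentiable and u : [0,T] → ℝᵐ continuous with ẋ(t) = f(t, x(t), u(t)), (t, x(t), u(t)) ∈ C_T for all t ∈ [0,T], and x(T) ∈ C_F, and suppose the cost J = ∫₀ᵀ h(t, x(t), u(t)) dt + H(x(T)) satisfies J − φ(0, x(0)) ≤ ε for some ε ≥ 0. Then both 0 ≤ H(x(T)) − φ(T, x(T)) ≤ ε and 0 ≤ ∫₀ᵀ [∂φ/∂t (t, x(t)) + ∇ₓφ(t, x(t)) · f(t, x(t), u(t)) + h(t, x(t), u(t))] dt ≤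 ε, and the integrand in the latter integral is nonnegative at every t ∈ [0,T]. -/
open MeasureTheory

/-! The total derivative of `φ` along the trajectory is `∂φ/∂t + ∇ₓφ · f`, by the chain rule and
the state equation (`deriv_add_sum_fderiv_eq`). Its integral over `[0, T]` is therefore
`φ(T, x(T)) - φ(0, x(0))`, so the terminal gap and the integrated HJB residual add up to exactly
`J - φ(0, x(0)) ≤ ε`. Both are nonnegative by the subsolution inequalities, hence each is at
most `ε`. -/

/-- The joint Fréchet derivative of `φ` in the direction `(1, v)`, split into the time derivative
and the gradient paired with `v` in coordinates. -/
lemma deriv_add_sum_fderiv_eq {n : ℕ} {φ : ℝ → (Fin n → ℝ) → ℝ} (t : ℝ) (y v : Fin n → ℝ)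
    (hφ : DifferentiableAt ℝ (fun p : ℝ × (Fin n → ℝ) => φ p.1 p.2) (t, y)) :
    deriv (fun s => φ s y) t + ∑ i, fderiv ℝ (φ t) y (Pi.single i 1) * v i
      = fderiv ℝ (fun p : ℝ × (Fin n → ℝ) => φ p.1 p.2) (t, y) (1, v) := by
  set L := fderiv ℝ (fun p : ℝ × (Fin n → ℝ) => φ p.1 p.2) (t, y) with hL
  have hF : HasFDerivAt (fun p : ℝ × (Fin n → ℝ) => φ p.1 p.2) L (t, y) := hφ.hasFDerivAt
  have h1 : HasDerivAt (fun s => φ s y) (L (1, 0)) t :=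
    HasFDerivAt.comp_hasDerivAt (f := fun s : ℝ => (s, y)) t hF
      ((hasDerivAt_id t).prodMk (hasDerivAt_const t y))
  have h2 : HasFDerivAt (φ t) (L.comp (ContinuousLinearMap.inr ℝ ℝ (Fin n → ℝ))) y :=
    HasFDerivAt.comp (f := fun z : Fin n → ℝ => (t, z)) y hF (hasFDerivAt_prodMk_right t y)
  have hsum : ∑ i, L (0, Pi.single i 1) * v i = L (0, v) := by
    have := (L.comp (ContinuousLinearMap.inr ℝ ℝ (Fin n → ℝ))).toLinearMap.pi_apply_eq_sum_univ v
    have hs : ∀ i : Fin n, (fun j => if i = j then (1 : ℝ) else 0) = Pi.single i 1 := by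
      intro i
      ext j
      simp [Pi.single_apply, eq_comm]
    simp only [hs] at this
    simpa [mul_comm] using this.symm
  rw [h1.deriv, h2.fderiv]
  simp only [ContinuousLinearMap.comp_apply, ContinuousLinearMap.inr_apply]
  rw [hsum, ← map_add]
  simp

/-- if `φ` is a smooth HJB subsolution and the cost `J` of an admissible
trajectory satisfies `J − φ(0,x(0)) ≤ ε` with `ε ≥ 0`, then both nonnegative terms
`H(x(T)) − φ(T,x(T))` and `∫₀ᵀ [∂φ/∂t + ∇ₓφ·f + h] dt` are at most `ε`, and the
integrand of the latter is nonnegative at every `t ∈ [0,T]`. -/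
theorem stmt9 (n m : ℕ) (T : ℝ) (hT : 0 < T)
    (f : ℝ → (Fin n → ℝ) → (Fin m → ℝ) → (Fin n → ℝ))
    (hf : Continuous fun p : ℝ × (Fin n → ℝ) × (Fin m → ℝ) => f p.1 p.2.1 p.2.2)
    (h : ℝ → (Fin n → ℝ) → (Fin m → ℝ) → ℝ)
    (hh : Continuous fun p : ℝ × (Fin n → ℝ) × (Fin m → ℝ) => h p.1 p.2.1 p.2.2)
    (H : (Fin n → ℝ) → ℝ)
    (CT : Set (ℝ × (Fin n → ℝ) × (Fin m → ℝ))) (CF : Set (Fin n → ℝ))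
    (φ : ℝ → (Fin n → ℝ) → ℝ)
    (hφ : ContDiff ℝ 1 fun p : ℝ × (Fin n → ℝ) => φ p.1 p.2)
    (hsub : ∀ t (y : Fin n → ℝ) (w : Fin m → ℝ), (t, y, w) ∈ CT →
      0 ≤ deriv (fun s => φ s y) t
          + ∑ i, fderiv ℝ (φ t) y (Pi.single i 1) * f t y w i + h t y w)
    (hfin : ∀ y ∈ CF, φ T y ≤ H y)
    -- admissible trajectory
    (x : ℝ → Fin n → ℝ) (hx : ContDiffOn ℝ 1 x (Set.Icc 0 T))
    (u : ℝ → Fin m → ℝ) (hu : ContinuousOn u (Set.Icc 0 T))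
    (hode : ∀ t ∈ Set.Icc 0 T, HasDerivAt x (f t (x t) (u t)) t)
    (htraj : ∀ t ∈ Set.Icc 0 T, (t, x t, u t) ∈ CT)
    (hfin' : x T ∈ CF)
    -- near-optimality of the trajectory for the bound φ(0, x(0))
    (ε : ℝ) (hε : 0 ≤ ε)
    (hJ : ((∫ t in (0:ℝ)..T, h t (x t) (u t)) + H (x T)) - φ 0 (x 0) ≤ ε) :
    (0 ≤ H (x T) - φ T (x T) ∧ H (x T) - φ T (x T) ≤ ε) ∧
    (0 ≤ (∫ t in (0:ℝ)..T,
            (deriv (fun s => φ s (x t)) t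
              + ∑ i, fderiv ℝ (φ t) (x t) (Pi.single i 1) * f t (x t) (u t) i
              + h t (x t) (u t))) ∧
      (∫ t in (0:ℝ)..T,
            (deriv (fun s => φ s (x t)) t
              + ∑ i, fderiv ℝ (φ t) (x t) (Pi.single i 1) * f t (x t) (u t) i
              + h t (x t) (u t))) ≤ ε) ∧
    (∀ t ∈ Set.Icc 0 T,
      0 ≤ deriv (fun s => φ s (x t)) t
          + ∑ i, fderiv ℝ (φ t) (x t) (Pi.single i 1) * f t (x t) (u t) i
          + h t (x t) (u t)) := by
  have hF : Differentiable ℝ fun p : ℝ × (Fin n → ℝ) => φ p.1 p.2 := hφ.differentiable one_ne_zero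
  have hxc : ContinuousOn x (Set.Icc 0 T) := hx.continuousOn
  have hpath : ContinuousOn (fun t => (t, x t, u t)) (Set.Icc 0 T) :=
    continuousOn_id.prodMk (hxc.prodMk hu)
  have hfc : ContinuousOn (fun t => f t (x t) (u t)) (Set.Icc 0 T) :=
    hf.comp_continuousOn hpath
  have hhc : ContinuousOn (fun t => h t (x t) (u t)) (Set.Icc 0 T) :=
    hh.comp_continuousOn hpath
  have hDc : ContinuousOn (fun t => fderiv ℝ (fun p : ℝ × (Fin n → ℝ) => φ p.1 p.2) (t, x t)
      (1, f t (x t) (u t))) (Set.Icc 0 T) :=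
    ((hφ.continuous_fderiv one_ne_zero).comp_continuousOn (continuousOn_id.prodMk hxc)).clm_apply
      (continuousOn_const.prodMk hfc)
  have hD : ∀ t ∈ Set.uIcc 0 T, HasDerivAt (fun t => φ t (x t))
      (fderiv ℝ (fun p : ℝ × (Fin n → ℝ) => φ p.1 p.2) (t, x t) (1, f t (x t) (u t))) t := by
    intro t ht
    rw [Set.uIcc_of_le hT.le] at ht
    exact HasFDerivAt.comp_hasDerivAt (f := fun s : ℝ => (s, x s)) t (hF (t, x t)).hasFDerivAt
      ((hasDerivAt_id t).prodMk (hode t ht))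
  have hDi := hDc.intervalIntegrable_of_Icc (μ := volume) hT.le
  have hhi := hhc.intervalIntegrable_of_Icc (μ := volume) hT.le
  have hftc := intervalIntegral.integral_eq_sub_of_hasDerivAt hD hDi
  have hnonneg : ∀ t ∈ Set.Icc 0 T,
      0 ≤ deriv (fun s => φ s (x t)) t
          + ∑ i, fderiv ℝ (φ t) (x t) (Pi.single i 1) * f t (x t) (u t) i
          + h t (x t) (u t) := fun t ht => hsub t (x t) (u t) (htraj t ht)
  have hpos := intervalIntegral.integral_nonneg (μ := volume) hT.le hnonneg
  have hgap := hfin (x T) hfin'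
  have heq : (∫ t in (0:ℝ)..T,
            (deriv (fun s => φ s (x t)) t
              + ∑ i, fderiv ℝ (φ t) (x t) (Pi.single i 1) * f t (x t) (u t) i
              + h t (x t) (u t)))
      = φ T (x T) - φ 0 (x 0) + ∫ t in (0:ℝ)..T, h t (x t) (u t) := by
    rw [← hftc, ← intervalIntegral.integral_add hDi hhi]
    congr 1
    ext t
    rw [deriv_add_sum_fderiv_eq t (x t) _ (hF (t, x t))]
  exact ⟨⟨by linarith, by linarith⟩, ⟨hpos, by linarith⟩, hnonneg⟩
end

section
/- Let f : ℝⁿ × ℝᵐ → ℝⁿ be continuous, let C_T ⊆ ℝⁿ × ℝᵐ, let x_F ∈ ℝⁿ, and let φ : ℝⁿ → ℝ be continuously differentiable with ∇φ(x) · f(x,u) + 1 ≥ 0 for all (x,u) ∈ C_T and φ(x_F) ≤ 0. Then for every τ > 0, every continuously differentiable x : [0,τ] → ℝⁿ and continuous u : [0,τ] → ℝᵐ with ẋ(t) = f(x(t), u(t)) and (x(t), u(t)) ∈ C_T for all t ∈ [0,τ] and x(τ) = x_F, one has τ ≥ φ(x(0)). In particular, φ(x(0)) is a lower bound on the minimum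 time needed to steer x(0) to x_F subject to the constraint (x, u) ∈ C_T. -/
/-!
Along an admissible trajectory the function `t ↦ φ (x t) + t` has derivative
`∇φ(x)·f(x,u) + 1 ≥ 0` by the chain rule, so it is monotone on `[0, τ]`. Comparing its values at
the endpoints gives `φ (x 0) ≤ φ xF + τ ≤ τ`.
-/

open MeasureTheory

/-- in the free-terminal-time minimum-time problem for time-invariant dynamics
`ẋ = f(x,u)`, a C¹ function `φ` with `∇φ(x)·f(x,u) + 1 ≥ 0` on `C_T` and `φ(x_F) ≤ 0`
provides the lower bound `φ(x(0)) ≤ τ` on the time `τ` of any admissible trajectory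
steering `x(0)` to `x_F`. -/
theorem stmt10 (n m : ℕ)
    (f : (Fin n → ℝ) → (Fin m → ℝ) → (Fin n → ℝ))
    (hf : Continuous fun p : (Fin n → ℝ) × (Fin m → ℝ) => f p.1 p.2)
    (CT : Set ((Fin n → ℝ) × (Fin m → ℝ))) (xF : Fin n → ℝ)
    (φ : (Fin n → ℝ) → ℝ) (hφ : ContDiff ℝ 1 φ)
    (hsub : ∀ (y : Fin n → ℝ) (w : Fin m → ℝ), (y, w) ∈ CT →
      0 ≤ ∑ i, fderiv ℝ φ y (Pi.single i 1) * f y w i + 1)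
    (hfin : φ xF ≤ 0)
    (τ : ℝ) (hτ : 0 < τ)
    (x : ℝ → Fin n → ℝ) (hx : ContDiffOn ℝ 1 x (Set.Icc 0 τ))
    (u : ℝ → Fin m → ℝ) (hu : ContinuousOn u (Set.Icc 0 τ))
    (hode : ∀ t ∈ Set.Icc 0 τ, HasDerivAt x (f (x t) (u t)) t)
    (htraj : ∀ t ∈ Set.Icc 0 τ, (x t, u t) ∈ CT)
    (hend : x τ = xF) :
    φ (x 0) ≤ τ := by
  have hder : ∀ t ∈ Set.Icc 0 τ, HasDerivAt (fun s => φ (x s) + s)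
      (fderiv ℝ φ (x t) (f (x t) (u t)) + 1) t := fun t ht =>
    (((hφ.differentiable one_ne_zero) (x t)).hasFDerivAt.comp_hasDerivAt t (hode t ht)).add
      (hasDerivAt_id t)
  -- The coordinate sum in `hsub` is the Fréchet derivative of `φ` applied to `v`.
  have hsum : ∀ y v : Fin n → ℝ,
      fderiv ℝ φ y v = ∑ i, fderiv ℝ φ y (Pi.single i 1) * v i := fun y v => by
    conv_lhs => rw [pi_eq_sum_univ' v, map_sum]
    refine Finset.sum_congr rfl fun i _ => ?_
    rw [map_smul, smul_eq_mul, mul_comm]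
  have hmono : MonotoneOn (fun s => φ (x s) + s) (Set.Icc 0 τ) := by
    refine monotoneOn_of_hasDerivWithinAt_nonneg (convex_Icc 0 τ)
      (fun t ht => (hder t ht).continuousAt.continuousWithinAt)
      (fun t ht => (hder t (interior_subset ht)).hasDerivWithinAt) fun t ht => ?_
    rw [hsum]
    exact hsub _ _ (htraj t (interior_subset ht))
  have h := hmono (Set.left_mem_Icc.2 hτ.le) (Set.right_mem_Icc.2 hτ.le) hτ.le
  simp only [hend] at h
  linarith
end

section
/- Consider the double integrator ẋ₁ = x₂, ẋ₂ = u with constraints x₂(t) ≥ −1 and −1 ≤ u(t) ≤ 1 for all t. For x = (x₁, x₂) with x₂ ≥ −1, define T(x) = x₂²/2 + x₁ + x₂ + 1 if x₁ ≥ 1 − x₂²/2; T(x) = 2√(x₂²/2 + x₁) + x₂ if x₁ ≤ 1 − x₂²/2 and x₁ ≥ −(x₂²/2)·sign(x₂); and T(x) = 2√(x₂²/2 − x₁) − x₂ if x₁ < −(x₂²/2)·sign(x₂). Then for every τ ≥ 0, every continuously differentiable trajectory (x₁, x₂) : [0,τ] → ℝ² and measurable control u : [0,τ] → ℝ satisfying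 ẋ₁(t) = x₂(t), ẋ₂(t) = u(t), |u(t)| ≤ 1 and x₂(t) ≥ −1 for all t, with (x₁(0), x₂(0)) = x and (x₁(τ), x₂(τ)) = (0,0), one has τ ≥ T(x); i.e., T(x) is a lower bound on the time needed to steer x to the origin. -/
/-!
Since `|u| ≤ 1`, the velocity satisfies `y₂ t ≥ x₂ - t` (integrating from the initial time) and
`y₂ t ≥ t - τ` (integrating back from the final time), besides the state constraint `y₂ t ≥ -1`.
Integrating the largest of these bounds, and using that the total displacement is `-x₁`, bounds
`τ` from below.

* The first two bounds meet at `t = (τ + x₂) / 2` and give `x₁ + x₂² / 2 ≤ ((τ - x₂) / 2)²`,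
  with no use of the state constraint (`two_phase`). This is the second branch of `T`;
  the third is the same inequality for the reflected trajectory `(-y₁, -y₂)`.
* For the first branch, all three bounds are used, on `[0, 1 + x₂]`, `[1 + x₂, τ - 1]` and
  `[τ - 1, τ]`. If these intervals are not in order, i.e. `τ < 2 + x₂`, then `two_phase` gives
  `x₁ + x₂² / 2 < 1`, contradicting membership in the first region.
-/

open Set

/-- The minimum-time value function `T(x)` for steering the double integrator
`ẋ₁ = x₂, ẋ₂ = u` with constraints `x₂ ≥ −1`, `|u| ≤ 1`, to the origin. -/
noncomputable def minTimeDI (x₁ x₂ : ℝ) : ℝ :=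
  if 1 - x₂ ^ 2 / 2 ≤ x₁ then x₂ ^ 2 / 2 + x₁ + x₂ + 1
  else if -(x₂ ^ 2 / 2) * Real.sign x₂ ≤ x₁ then 2 * Real.sqrt (x₂ ^ 2 / 2 + x₁) + x₂
  else 2 * Real.sqrt (x₂ ^ 2 / 2 - x₁) - x₂

lemma sub_le_sub_of_hasDerivAt_le {f g f' g' : ℝ → ℝ} {a b : ℝ} (hab : a ≤ b)
    (hf : ∀ t ∈ Icc a b, HasDerivAt f (f' t) t) (hg : ∀ t ∈ Icc a b, HasDerivAt g (g' t) t)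
    (h : ∀ t ∈ Icc a b, f' t ≤ g' t) : f b - f a ≤ g b - g a := by
  have hd : ∀ t ∈ Icc a b, HasDerivAt (fun t => g t - f t) (g' t - f' t) t :=
    fun t ht => (hg t ht).sub (hf t ht)
  have hm : MonotoneOn (fun t => g t - f t) (Icc a b) := by
    refine monotoneOn_of_hasDerivWithinAt_nonneg (f' := fun t => g' t - f' t) (convex_Icc a b)
      (fun t ht => (hd t ht).continuousAt.continuousWithinAt)
      (fun t ht => (hd t (interior_subset ht)).hasDerivWithinAt)
      (fun t ht => sub_nonneg.2 (h t (interior_subset ht)))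
  have := hm (left_mem_Icc.2 hab) (right_mem_Icc.2 hab) hab
  simp only at this
  linarith

/-- A velocity bounded below by the affine function `c + k t` on `[a, b]` produces at least the
corresponding displacement. -/
lemma displacement_ge {y v : ℝ → ℝ} {a b : ℝ} (c k : ℝ) (hab : a ≤ b)
    (hy : ∀ t ∈ Icc a b, HasDerivAt y (v t) t) (h : ∀ t ∈ Icc a b, c + k * t ≤ v t) :
    c * (b - a) + k * (b ^ 2 - a ^ 2) / 2 ≤ y b - y a := by
  have := sub_le_sub_of_hasDerivAt_le (f := fun t => c * t + k * t ^ 2 / 2)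
    (f' := fun t => c + k * t) hab (fun t _ => by
      have h1 := ((hasDerivAt_id t).const_mul c).add
        ((((hasDerivAt_id t).pow 2).const_mul k).div_const 2)
      refine (h1.congr_deriv ?_)
      simp
      ring) hy h
  linarith

lemma abs_sub_le_of_abs_deriv_le_one {v u : ℝ → ℝ} {a b : ℝ} (hab : a ≤ b)
    (hv : ∀ t ∈ Icc a b, HasDerivAt v (u t) t) (hu : ∀ t ∈ Icc a b, |u t| ≤ 1) :
    |v b - v a| ≤ b - a := by
  have h1 := displacement_ge (-1) 0 hab hv (fun t ht => by
    have := (abs_le.1 (hu t ht)).1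
    linarith)
  have h2 := displacement_ge (-1) 0 hab (fun t ht => (hv t ht).neg) (fun t ht => by
    have := (abs_le.1 (hu t ht)).2
    linarith)
  simp only [Pi.neg_apply] at h2
  rw [abs_le]
  constructor <;> linarith

/-- The cone of velocities compatible with the boundary values: forwards from time `0` and
backwards from time `τ`, the velocity drops at most at unit rate. -/
lemma velocity_bounds {τ : ℝ} {y₂ u : ℝ → ℝ}
    (hode₂ : ∀ t ∈ Icc 0 τ, HasDerivAt y₂ (u t) t) (hub : ∀ t ∈ Icc 0 τ, |u t| ≤ 1)
    (hτ₂ : y₂ τ = 0) {t : ℝ} (ht : t ∈ Icc 0 τ) : y₂ 0 - t ≤ y₂ t ∧ t - τ ≤ y₂ t := by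
  have h1 := abs_sub_le_of_abs_deriv_le_one ht.1
    (fun s hs => hode₂ s ⟨hs.1, hs.2.trans ht.2⟩) (fun s hs => hub s ⟨hs.1, hs.2.trans ht.2⟩)
  have h2 := abs_sub_le_of_abs_deriv_le_one ht.2
    (fun s hs => hode₂ s ⟨ht.1.trans hs.1, hs.2⟩) (fun s hs => hub s ⟨ht.1.trans hs.1, hs.2⟩)
  rw [abs_le] at h1 h2
  constructor <;> linarith

/-- The lower bound from the unconstrained problem, attained by the control that is `-1` up to
time `(τ + x₂) / 2` and `1` afterwards. -/
lemma two_phase {τ : ℝ} (hτ : 0 ≤ τ) {y₁ y₂ u : ℝ → ℝ}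
    (hode₁ : ∀ t ∈ Icc 0 τ, HasDerivAt y₁ (y₂ t) t)
    (hode₂ : ∀ t ∈ Icc 0 τ, HasDerivAt y₂ (u t) t)
    (hub : ∀ t ∈ Icc 0 τ, |u t| ≤ 1) (hτ₁ : y₁ τ = 0) (hτ₂ : y₂ τ = 0) :
    |y₂ 0| ≤ τ ∧ y₁ 0 + y₂ 0 ^ 2 / 2 ≤ ((τ - y₂ 0) / 2) ^ 2 := by
  have hx : |y₂ 0| ≤ τ := by
    simpa [hτ₂] using abs_sub_le_of_abs_deriv_le_one hτ hode₂ hub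
  refine ⟨hx, ?_⟩
  rw [abs_le] at hx
  obtain ⟨s, hs⟩ : ∃ s, s = (τ + y₂ 0) / 2 := ⟨_, rfl⟩
  have hs0 : 0 ≤ s := by linarith
  have hsτ : s ≤ τ := by linarith
  have h1 := displacement_ge (y₂ 0) (-1) hs0 (fun t ht => hode₁ t ⟨ht.1, ht.2.trans hsτ⟩)
    (fun t ht => by
      have := (velocity_bounds hode₂ hub hτ₂ ⟨ht.1, ht.2.trans hsτ⟩).1
      linarith)
  have h2 := displacement_ge (-τ) 1 hsτ (fun t ht => hode₁ t ⟨hs0.trans ht.1, ht.2⟩)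
    (fun t ht => by
      have := (velocity_bounds hode₂ hub hτ₂ ⟨hs0.trans ht.1, ht.2⟩).2
      linarith)
  subst hs
  rw [hτ₁] at h2
  nlinarith

/-- `T(x) = minTimeDI x₁ x₂` is a lower bound on the time `τ` needed by any
admissible trajectory of the double integrator (state constraint `x₂ ≥ −1`, input
constraint `|u| ≤ 1`) to steer `x = (x₁, x₂)` to the origin. -/
theorem stmt13 (x₁ x₂ : ℝ) (hx₂ : -1 ≤ x₂) (τ : ℝ) (hτ : 0 ≤ τ)
    (y₁ y₂ u : ℝ → ℝ) (hu : Measurable u)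
    (hy₁ : ContDiffOn ℝ 1 y₁ (Icc 0 τ)) (hy₂ : ContDiffOn ℝ 1 y₂ (Icc 0 τ))
    (hode₁ : ∀ t ∈ Icc 0 τ, HasDerivAt y₁ (y₂ t) t)
    (hode₂ : ∀ t ∈ Icc 0 τ, HasDerivAt y₂ (u t) t)
    (hub : ∀ t ∈ Icc 0 τ, |u t| ≤ 1)
    (hcon : ∀ t ∈ Icc 0 τ, -1 ≤ y₂ t)
    (h0₁ : y₁ 0 = x₁) (h0₂ : y₂ 0 = x₂)
    (hτ₁ : y₁ τ = 0) (hτ₂ : y₂ τ = 0) :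
    minTimeDI x₁ x₂ ≤ τ := by
  obtain ⟨hx, h2⟩ := two_phase hτ hode₁ hode₂ hub hτ₁ hτ₂
  obtain ⟨-, h3⟩ := two_phase (y₁ := -y₁) (y₂ := -y₂) (u := fun t => -u t) hτ
    (fun t ht => (hode₁ t ht).neg) (fun t ht => (hode₂ t ht).neg)
    (fun t ht => by simpa using hub t ht) (by simp [hτ₁]) (by simp [hτ₂])
  simp only [Pi.neg_apply] at h3
  rw [abs_le] at hx
  rw [h0₁, h0₂] at h2 h3
  rw [h0₂] at hx
  unfold minTimeDI
  split_ifs with hA hB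
  · have hlong : 2 + x₂ ≤ τ := by
      by_contra! hlt
      nlinarith
    have e1 := displacement_ge x₂ (-1) (a := 0) (b := 1 + x₂) (by linarith)
      (fun t ht => hode₁ t ⟨ht.1, by linarith [ht.2]⟩)
      (fun t ht => by
        have := (velocity_bounds hode₂ hub hτ₂ (t := t) ⟨ht.1, by linarith [ht.2]⟩).1
        linarith)
    have e2 := displacement_ge (-1) 0 (a := 1 + x₂) (b := τ - 1) (by linarith)
      (fun t ht => hode₁ t ⟨by linarith [ht.1], by linarith [ht.2]⟩)
      (fun t ht => by
        have := hcon t ⟨by linarith [ht.1], by linarith [ht.2]⟩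
        linarith)
    have e3 := displacement_ge (-τ) 1 (a := τ - 1) (b := τ) (by linarith)
      (fun t ht => hode₁ t ⟨by linarith [ht.1], ht.2⟩)
      (fun t ht => by
        have := (velocity_bounds hode₂ hub hτ₂ (t := t) ⟨by linarith [ht.1], ht.2⟩).2
        linarith)
    nlinarith
  · have := Real.sqrt_le_sqrt h2
    rw [Real.sqrt_sq (by linarith), add_comm] at this
    linarith
  · have h3' : x₂ ^ 2 / 2 - x₁ ≤ ((τ + x₂) / 2) ^ 2 := by nlinarith
    have := Real.sqrt_le_sqrt h3'
    rw [Real.sqrt_sq (by linarith)] at this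
    linarith
end
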